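/- Let n be a finite index type, and let A, M : ℝ → Matrix n n ℝ be matrix-valued functions such that A has derivative M(t₀)·A(t₀) at the point t₀ (as a function into the normed space of matrices). Then the function t ↦ det(A(t)) has derivative trace(M(t₀))·det(A(t₀)) at t₀. (This Liouville-type determinant formula is the finite-dimensional engine behind the paper's instantaneous change-of-variables formula for the CNF prior: along ODE trajectories the log-Jacobian of the flow evolves with rate equal to the divergence of the vector field, yielding the explicit log-density log p_ψ(z₀) = log p₁(z₁) + ∫₀¹ ∇·v_ψ(z_t, t) dt.) -/

import Mathlib

attribute [local instance] Matrix.normedAddCommGroup Matrix.normedSpace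

/-!
The determinant is linear in each row, so its derivative at `A` in the direction `B` is the sum of
the determinants of `A` with one row replaced by the corresponding row of `B`. By Cramer's rule this
sum is `trace (adj A * B)`, and for `B = M * A` cyclicity of the trace and `A * adj A = det A • 1`
turn it into `trace M * det A`.
-/

section Jacobi

open Matrix

variable {n R : Type*} [Fintype n] [DecidableEq n]

section CommRing

variable [CommRing R]

theorem det_updateRow_eq_vecMul_adjugate (A : Matrix n n R) (i : n) (b : n → R) :
    (A.updateRow i b).det = (b ᵥ* A.adjugate) i := by
  rw [← cramer_transpose_apply, cramer_eq_adjugate_mulVec, ← adjugate_transpose, mulVec_transpose]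

theorem sum_det_updateRow_row (A B : Matrix n n R) :
    ∑ i, (A.updateRow i (B.row i)).det = (A.adjugate * B).trace :=
  calc ∑ i, (A.updateRow i (B.row i)).det
    _ = ∑ i, (B.row i ᵥ* A.adjugate) i := by simp only [det_updateRow_eq_vecMul_adjugate]
    _ = (B * A.adjugate).trace := rfl
    _ = (A.adjugate * B).trace := trace_mul_comm B A.adjugate

theorem trace_adjugate_mul_mul_self (A M : Matrix n n R) :
    (A.adjugate * (M * A)).trace = M.trace * A.det :=
  calc (A.adjugate * (M * A)).trace
    _ = (A * A.adjugate * M).trace := by rw [← Matrix.mul_assoc, trace_mul_cycle]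
    _ = (A.det • M).trace := by rw [mul_adjugate, smul_one_mul]
    _ = M.trace * A.det := by rw [trace_smul, smul_eq_mul, mul_comm]

end CommRing

variable (𝕜 : Type*) [NontriviallyNormedField 𝕜] [NormedCommRing R] [NormedAlgebra 𝕜 R]

variable (n R) in
/-- The determinant as a continuous `𝕜`-multilinear map of the rows of a matrix, so that the
calculus of multilinear maps applies to it. Scalars are restricted from the entry ring `R` to the
field `𝕜` of differentiation. -/
def detRowContinuousMultilinear : ContinuousMultilinearMap 𝕜 (fun _ : n ↦ n → R) R where
  toMultilinearMap := (detRowAlternating (n := n) (R := R)).toMultilinearMap.restrictScalars 𝕜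
  cont := continuous_id.matrix_det

theorem detRowContinuousMultilinear_linearDeriv_apply (A B : Matrix n n R) :
    (detRowContinuousMultilinear n R 𝕜).linearDeriv A B = (A.adjugate * B).trace :=
  (ContinuousMultilinearMap.linearDeriv_apply _ A B).trans (sum_det_updateRow_row A B)

variable {𝕜}

theorem hasDerivAt_det {A : 𝕜 → Matrix n n R} {A' : Matrix n n R} {t : 𝕜}
    (hA : HasDerivAt A A' t) :
    HasDerivAt (fun s ↦ (A s).det) ((A t).adjugate * A').trace t := by
  rw [← detRowContinuousMultilinear_linearDeriv_apply 𝕜]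
  exact ((detRowContinuousMultilinear n R 𝕜).hasFDerivAt (A t)).comp_hasDerivAt t hA

theorem det_hasDerivAt_of_variational_equation_general
    {A : 𝕜 → Matrix n n R} {M : Matrix n n R} {t₀ : 𝕜} (hA : HasDerivAt A (M * A t₀) t₀) :
    HasDerivAt (fun t ↦ (A t).det) (M.trace * (A t₀).det) t₀ := by
  rw [← trace_adjugate_mul_mul_self]
  exact hasDerivAt_det hA

end Jacobi

/-- Liouville's determinant formula (the engine behind the instantaneous
change-of-variables formula for the CNF prior): if a matrix-valued curve `A`
satisfies the variational equation `A'(t₀) = M(t₀) · A(t₀)`, then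
`(det ∘ A)'(t₀) = trace (M t₀) · det (A t₀)`. -/
theorem det_hasDerivAt_of_variational_equation
    {n : Type*} [Fintype n] [DecidableEq n]
    (A M : ℝ → Matrix n n ℝ) (t₀ : ℝ)
    (hA : HasDerivAt A (M t₀ * A t₀) t₀) :
    HasDerivAt (fun t => (A t).det) ((M t₀).trace * (A t₀).det) t₀ :=
  det_hasDerivAt_of_variational_equation_general hA
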